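/- arXiv:1601.04749 — 6 statements merged into one kernel-verified Lean document; each statement's English description precedes it below -/
import Mathlib

section
/- Let R = [r_{i,k}] be a rate allocation matrix for backlogged set B. Then R is CM4-fair if and only if for every backlogged user j ∈ B, every user i, and every server k, the conditions r_{i,k} > 0 and π_{j,k} = 1 together imply r_j/φ_j ≥ r_i/φ_i, where r_i = Σ_k r_{i,k}. -/
open Finset

/-- A rate allocation matrix: nonnegative, zero for non-backlogged users,
zero for ineligible pairs, and work-conserving at each server. -/
def IsRateAlloc {N K : ℕ} (B : Set (Fin N)) (π : Fin N → Fin K → Bool)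
    (ρ : Fin K → ℝ) (R : Fin N → Fin K → ℝ) : Prop :=
  (∀ i k, 0 ≤ R i k) ∧
  (∀ i k, i ∉ B → R i k = 0) ∧
  (∀ i k, π i k = false → R i k = 0) ∧
  (∀ k, (∃ i ∈ B, π i k = true) → ∑ i, R i k = ρ k)

/-- Total service rate of user `i`. -/
noncomputable def totalRate {N K : ℕ} (R : Fin N → Fin K → ℝ) (i : Fin N) : ℝ :=
  ∑ k, R i k

/-- Constrained multi-user multi-server max-min (CM4) fairness. -/
def CM4Fair {N K : ℕ} (B : Set (Fin N)) (π : Fin N → Fin K → Bool)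
    (ρ : Fin K → ℝ) (φ : Fin N → ℝ) (R : Fin N → Fin K → ℝ) : Prop :=
  IsRateAlloc B π ρ R ∧
  ∀ R' : Fin N → Fin K → ℝ, IsRateAlloc B π ρ R' →
    ∀ i, totalRate R i / φ i < totalRate R' i / φ i →
      ∃ j, totalRate R j / φ j ≤ totalRate R i / φ i ∧
        totalRate R' j / φ j < totalRate R j / φ j

/-!
If some user served by server `k` has a larger normalized rate than a backlogged user `j` eligible
for `k`, handing that user's share of `k` over to `j` raises `j` and lowers only a user better off
than `j`, which contradicts max-min fairness. Conversely, suppose another allocation raises `i`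
without lowering any user in the set `S` of users at most as well off as `i`. Then `S` gains in
total, hence it gains at some server `k`; as the rate of `k` is fixed, `k` serves some `j ∈ S` more
and some `l ∉ S` less than before. So `l` was served by `k`, which `j` may use, although `l` is
strictly better off than `j`.
-/

section Transfer

variable {m n α : Type*} [DecidableEq m]

/-- The matrix obtained from `R` by moving the amount `δ` from entry `(i, k)` to entry `(j, k)`:
in terms of rates, server `k` takes `δ` away from user `i` and gives it to user `j`. The cases
`i = j` and `δ < 0` are allowed. -/
def transfer [DecidableEq n] [AddCommGroup α] (R : m → n → α) (i j : m) (k : n) (δ : α) :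
    m → n → α :=
  fun a l ↦ R a l + (if a = j ∧ l = k then δ else 0) - (if a = i ∧ l = k then δ else 0)

theorem row_sum_transfer [DecidableEq n] [Fintype n] [AddCommGroup α] (R : m → n → α) (i j : m)
    (k : n) (δ : α) (a : m) :
    ∑ l, transfer R i j k δ a l =
      ∑ l, R a l + (if a = j then δ else 0) - (if a = i then δ else 0) := by
  simp [transfer, Finset.sum_add_distrib, ite_and]

theorem column_sum_transfer [DecidableEq n] [Fintype m] [AddCommGroup α] (R : m → n → α)
    (i j : m) (k : n) (δ : α) (l : n) :
    ∑ a, transfer R i j k δ a l = ∑ a, R a l := by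
  simp [transfer, Finset.sum_add_distrib, ite_and]

variable [DecidableEq n] [AddCommGroup α] [PartialOrder α] [IsOrderedAddMonoid α]
  {R : m → n → α} {i j : m} {k : n} {δ : α}

theorem transfer_nonneg (hR : ∀ a l, 0 ≤ R a l) (hδ : 0 ≤ δ) (hδR : δ ≤ R i k) (a : m) (l : n) :
    0 ≤ transfer R i j k δ a l := by
  have loss_le : (if a = i ∧ l = k then δ else 0) ≤ R a l := by
    split_ifs with h
    · rwa [h.1, h.2]
    · exact hR a l
  have gain_nonneg : 0 ≤ if a = j ∧ l = k then δ else 0 := ite_nonneg hδ le_rfl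
  exact sub_nonneg.2 (loss_le.trans (le_add_of_nonneg_right gain_nonneg))

theorem transfer_le_of_not (hδ : 0 ≤ δ) {a : m} {l : n} (hne : ¬(a = j ∧ l = k)) :
    transfer R i j k δ a l ≤ R a l := by
  rw [transfer, if_neg hne, add_zero]
  exact sub_le_self _ (ite_nonneg hδ le_rfl)

end Transfer

theorem exists_notMem_lt_of_sum_lt {ι M : Type*} [Fintype ι] [AddCommMonoid M] [LinearOrder M]
    [IsOrderedCancelAddMonoid M] {f g : ι → M} {s : Finset ι}
    (hlt : ∑ i ∈ s, f i < ∑ i ∈ s, g i) (heq : ∑ i, f i = ∑ i, g i) :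
    ∃ i ∉ s, g i < f i := by
  classical
  by_contra! hle
  have compl_le : ∑ i ∈ sᶜ, f i ≤ ∑ i ∈ sᶜ, g i :=
    Finset.sum_le_sum fun i hi ↦ hle i (Finset.mem_compl.1 hi)
  have sum_lt := add_lt_add_of_lt_of_le hlt compl_le
  rw [Finset.sum_add_sum_compl, Finset.sum_add_sum_compl] at sum_lt
  exact sum_lt.ne heq

section Allocation

variable {N K : ℕ} {B : Set (Fin N)} {π : Fin N → Fin K → Bool} {ρ : Fin K → ℝ} {φ : Fin N → ℝ}
  {R R' : Fin N → Fin K → ℝ} {i j : Fin N} {k : Fin K}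

theorem totalRate_transfer (R : Fin N → Fin K → ℝ) (i j : Fin N) (k : Fin K) (δ : ℝ)
    (a : Fin N) :
    totalRate (transfer R i j k δ) a =
      totalRate R a + (if a = j then δ else 0) - (if a = i then δ else 0) :=
  row_sum_transfer R i j k δ a

theorem isRateAlloc_transfer (hR : IsRateAlloc B π ρ R) (hj : j ∈ B) (hjk : π j k = true)
    {δ : ℝ} (hδ : 0 ≤ δ) (hδR : δ ≤ R i k) : IsRateAlloc B π ρ (transfer R i j k δ) := by
  obtain ⟨R_nonneg, R_backlogged, R_eligible, R_rate⟩ := hR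
  have nonneg := transfer_nonneg (j := j) R_nonneg hδ hδR
  have eq_zero {a : Fin N} {l : Fin K} (hne : ¬(a = j ∧ l = k)) (hal : R a l = 0) :
      transfer R i j k δ a l = 0 :=
    ((transfer_le_of_not hδ hne).trans_eq hal).antisymm (nonneg a l)
  refine ⟨nonneg, fun a l ha ↦ ?_, fun a l hal ↦ ?_, fun l hl ↦ ?_⟩
  · exact eq_zero (fun h ↦ ha (h.1 ▸ hj)) (R_backlogged a l ha)
  · refine eq_zero ?_ (R_eligible a l hal)
    rintro ⟨rfl, rfl⟩
    exact Bool.false_ne_true (hal.symm.trans hjk)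
  · rw [column_sum_transfer, R_rate l hl]

namespace IsRateAlloc

theorem mem_of_pos (hR : IsRateAlloc B π ρ R) (hpos : 0 < R i k) : i ∈ B := by
  by_contra hi
  exact hpos.ne' (hR.2.1 i k hi)

theorem eligible_of_pos (hR : IsRateAlloc B π ρ R) (hpos : 0 < R i k) : π i k = true := by
  by_contra hik
  exact hpos.ne' (hR.2.2.1 i k (Bool.eq_false_of_not_eq_true hik))

theorem column_sum_eq (hR : IsRateAlloc B π ρ R) (hj : j ∈ B) (hjk : π j k = true) :
    ∑ i, R i k = ρ k :=
  hR.2.2.2 k ⟨j, hj, hjk⟩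

theorem exists_pos_notMem_of_sum_totalRate_lt (hR : IsRateAlloc B π ρ R)
    (hR' : IsRateAlloc B π ρ R') {S : Finset (Fin N)}
    (hlt : ∑ j ∈ S, totalRate R j < ∑ j ∈ S, totalRate R' j) :
    ∃ k, (∃ j ∈ S, j ∈ B ∧ π j k = true) ∧ ∃ l ∉ S, 0 < R l k := by
  obtain ⟨k, -, hk⟩ : ∃ k ∈ Finset.univ, ∑ j ∈ S, R j k < ∑ j ∈ S, R' j k := by
    refine Finset.exists_lt_of_sum_lt ?_
    rwa [Finset.sum_comm, Finset.sum_comm (s := Finset.univ)]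
  obtain ⟨j, hjS, hj⟩ := Finset.exists_lt_of_sum_lt hk
  have hj_pos : 0 < R' j k := (hR.1 j k).trans_lt hj
  have hjB : j ∈ B := hR'.mem_of_pos hj_pos
  have hjk : π j k = true := hR'.eligible_of_pos hj_pos
  have same_rate : ∑ a, R a k = ∑ a, R' a k :=
    (hR.column_sum_eq hjB hjk).trans (hR'.column_sum_eq hjB hjk).symm
  obtain ⟨l, hlS, hl⟩ := exists_notMem_lt_of_sum_lt hk same_rate
  exact ⟨k, ⟨j, hjS, hjB, hjk⟩, l, hlS, (hR'.1 l k).trans_lt hl⟩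

theorem cm4Fair_of_forall_le (hφ : ∀ i, 0 < φ i) (hR : IsRateAlloc B π ρ R)
    (hle : ∀ j ∈ B, ∀ i k, 0 < R i k → π j k = true →
      totalRate R i / φ i ≤ totalRate R j / φ j) :
    CM4Fair B π ρ φ R := by
  refine ⟨hR, fun R' hR' i hi ↦ ?_⟩
  by_contra! not_lowered
  let S : Finset (Fin N) := {j | totalRate R j / φ j ≤ totalRate R i / φ i}
  have mem_S (j : Fin N) : j ∈ S ↔ totalRate R j / φ j ≤ totalRate R i / φ i :=
    Finset.mem_filter_univ j
  have S_gains : ∑ j ∈ S, totalRate R j < ∑ j ∈ S, totalRate R' j := by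
    refine Finset.sum_lt_sum (fun j hj ↦ ?_) ⟨i, (mem_S i).2 le_rfl, ?_⟩
    · exact (div_le_div_iff_of_pos_right (hφ j)).1 (not_lowered j ((mem_S j).1 hj))
    · exact (div_lt_div_iff_of_pos_right (hφ i)).1 hi
  obtain ⟨k, ⟨j, hjS, hjB, hjk⟩, l, hlS, hl⟩ :=
    hR.exists_pos_notMem_of_sum_totalRate_lt hR' S_gains
  exact hlS ((mem_S l).2 ((hle j hjB l k hl hjk).trans ((mem_S j).1 hjS)))

end IsRateAlloc

theorem CM4Fair.div_le_div_of_pos (hφ : ∀ i, 0 < φ i) (hfair : CM4Fair B π ρ φ R) (hj : j ∈ B)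
    (hik : 0 < R i k) (hjk : π j k = true) :
    totalRate R i / φ i ≤ totalRate R j / φ j := by
  by_contra! hji
  have hne : j ≠ i := by
    rintro rfl
    exact hji.false
  have alloc : IsRateAlloc B π ρ (transfer R i j k (R i k)) :=
    isRateAlloc_transfer hfair.1 hj hjk hik.le le_rfl
  have j_gains : totalRate R j < totalRate (transfer R i j k (R i k)) j := by
    simpa [totalRate_transfer, hne] using hik
  have only_i_loses {l : Fin N} (hl : totalRate (transfer R i j k (R i k)) l < totalRate R l) :
      l = i := by
    by_contra hli
    rw [totalRate_transfer, if_neg hli, sub_zero] at hl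
    exact hl.not_ge (le_add_of_nonneg_right (ite_nonneg hik.le le_rfl))
  obtain ⟨l, hlj, hl⟩ := hfair.2 _ alloc j (div_lt_div_of_pos_right j_gains (hφ j))
  obtain rfl := only_i_loses ((div_lt_div_iff_of_pos_right (hφ l)).1 hl)
  exact hji.not_ge hlj

end Allocation

/-- Theorem 1: `R` is CM4-fair iff for every backlogged user `j`, every user
`i` and every server `k`, `r_{i,k} > 0` and `π_{j,k} = 1` imply
`r_j/φ_j ≥ r_i/φ_i`. -/
theorem cm4fair_iff {N K : ℕ} (hN : 0 < N) (hK : 0 < K)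
    (B : Set (Fin N)) (π : Fin N → Fin K → Bool) (ρ : Fin K → ℝ) (φ : Fin N → ℝ)
    (hφ : ∀ i, 0 < φ i) (hρ : ∀ k, 0 ≤ ρ k)
    (hrow : ∀ i, ∃ k, π i k = true) (hcol : ∀ k, ∃ i, π i k = true)
    (R : Fin N → Fin K → ℝ) (hR : IsRateAlloc B π ρ R) :
    CM4Fair B π ρ φ R ↔
      ∀ j ∈ B, ∀ (i : Fin N) (k : Fin K), 0 < R i k → π j k = true →
        totalRate R i / φ i ≤ totalRate R j / φ j :=
  ⟨fun hfair _ hj _ _ hik hjk ↦ hfair.div_le_div_of_pos hφ hj hik hjk,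
    hR.cm4Fair_of_forall_le hφ⟩
end

section
/- If R and R' are both CM4-fair rate allocation matrices for the same backlogged set B, server rates ρ, eligibility matrix Π and weights φ, then every user receives the same total rate under both: r_i = r'_i for every user i (equivalently, the normalized rate r_i/φ_i of each user is uniquely determined). -/
open Finset

/-!
Compare two max-min fair vectors `x` and `y` at an index `i` with `x i ≠ y i`. Whichever of them is
smaller at `i`, its fairness yields an index `j` at which they differ again and
`min (x j) (y j) < min (x i) (y i)`. Among finitely many indices this descent cannot continue, so
`x = y`.
-/

section MaxMinFair

variable {A ι α : Type*} [LinearOrder α]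

/-- The max-min comparison of two vectors: wherever `y` exceeds `x`, it does so at the expense of a
coordinate that was no better off in `x`. A vector is max-min fair in a set when it compares in this
way with every member of the set. -/
def MaxMinDominates (x y : ι → α) : Prop :=
  ∀ i, x i < y i → ∃ j, x j ≤ x i ∧ y j < x j

theorem MaxMinDominates.exists_min_lt_min {x y : ι → α} (h : MaxMinDominates x y) {i : ι}
    (hi : x i < y i) : ∃ j, x j ≠ y j ∧ min (x j) (y j) < min (x i) (y i) := by
  obtain ⟨j, hji, hj⟩ := h i hi
  refine ⟨j, hj.ne', ?_⟩
  calc min (x j) (y j) ≤ y j := min_le_right _ _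
    _ < x j := hj
    _ ≤ x i := hji
    _ = min (x i) (y i) := (min_eq_left hi.le).symm

theorem MaxMinDominates.antisymm [Finite ι] {x y : ι → α} (hxy : MaxMinDominates x y)
    (hyx : MaxMinDominates y x) : x = y := by
  by_contra hne
  obtain ⟨i, hi, hmin⟩ := Set.exists_min_image {i | x i ≠ y i} (fun i ↦ min (x i) (y i))
    (Set.toFinite _) (Function.ne_iff.mp hne)
  obtain ⟨j, hj, hlt⟩ : ∃ j, x j ≠ y j ∧ min (x j) (y j) < min (x i) (y i) := by
    rcases lt_or_gt_of_ne hi with hlt | hgt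
    · exact hxy.exists_min_lt_min hlt
    · simpa only [ne_comm, min_comm] using hyx.exists_min_lt_min hgt
  exact (hmin j hj).not_gt hlt

/-- Max-min fairness of `a` among the feasible points `s`, where `u b i` is the utility that agent
`i` derives from `b`. The argument order is that of `IsMaxOn`. -/
def IsMaxMinFairOn (u : A → ι → α) (s : Set A) (a : A) : Prop :=
  a ∈ s ∧ ∀ b ∈ s, MaxMinDominates (u a) (u b)

theorem cm4fair_rate_unique_general [Finite ι] {u : A → ι → α} {s : Set A} {a b : A}
    (ha : IsMaxMinFairOn u s a) (hb : IsMaxMinFairOn u s b) : u a = u b :=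
  (ha.2 b hb.1).antisymm (hb.2 a ha.1)

end MaxMinFair

/-- The normalized rate `r_i / φ_i` of user `i`, the utility that CM4-fairness compares. -/
noncomputable def normalizedRate {N K : ℕ} (φ : Fin N → ℝ) (R : Fin N → Fin K → ℝ) (i : Fin N) :
    ℝ :=
  totalRate R i / φ i

theorem cm4Fair_iff_isMaxMinFairOn {N K : ℕ} {B : Set (Fin N)} {π : Fin N → Fin K → Bool}
    {ρ : Fin K → ℝ} {φ : Fin N → ℝ} {R : Fin N → Fin K → ℝ} :
    CM4Fair B π ρ φ R ↔ IsMaxMinFairOn (normalizedRate φ) {R | IsRateAlloc B π ρ R} R :=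
  Iff.rfl

/-- Uniqueness of total rates: any two CM4-fair rate allocation matrices for
the same data give every user the same total rate. -/
theorem cm4fair_rate_unique {N K : ℕ} (hN : 0 < N) (hK : 0 < K)
    (B : Set (Fin N)) (π : Fin N → Fin K → Bool) (ρ : Fin K → ℝ) (φ : Fin N → ℝ)
    (hφ : ∀ i, 0 < φ i) (hρ : ∀ k, 0 ≤ ρ k)
    (hrow : ∀ i, ∃ k, π i k = true) (hcol : ∀ k, ∃ i, π i k = true)
    (R R' : Fin N → Fin K → ℝ)
    (hR : CM4Fair B π ρ φ R) (hR' : CM4Fair B π ρ φ R') :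
    ∀ i, totalRate R i = totalRate R' i := by
  have hnorm : normalizedRate φ R = normalizedRate φ R' := cm4fair_rate_unique_general
    (cm4Fair_iff_isMaxMinFairOn.mp hR) (cm4Fair_iff_isMaxMinFairOn.mp hR')
  exact fun i ↦ (div_left_inj' (hφ i).ne').mp (congrFun hnorm i)
end

section
/- Let {(I_m, S_m)}_{m=1}^{M} be an FOC for a CM4-fair rate allocation matrix R. If some user j ∈ I_m with positive total rate r_j > 0 is eligible to a server k in another cluster, i.e. π_{j,k} = 1 and k ∈ S_l with l ≠ m, then r^{C_m} > r^{C_l}. -/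
open Finset

/-- A Fairness Oriented Clustering (FOC) for a rate allocation matrix `R`:
a partition of users into `M` nonempty classes and of servers into `M`
pairwise disjoint classes, with a common normalized rate per cluster,
distinct cluster rates, and the server-membership characterization. -/
structure IsFOC {N K M : ℕ} (π : Fin N → Fin K → Bool) (φ : Fin N → ℝ)
    (R : Fin N → Fin K → ℝ)
    (I : Fin M → Finset (Fin N)) (S : Fin M → Finset (Fin K))
    (rC : Fin M → ℝ) : Prop where
  I_nonempty : ∀ m, (I m).Nonempty
  I_disjoint : ∀ m l, m ≠ l → Disjoint (I m) (I l)
  I_cover : ∀ i, ∃ m, i ∈ I m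
  S_disjoint : ∀ m l, m ≠ l → Disjoint (S m) (S l)
  S_cover : ∀ k, ∃ m, k ∈ S m
  rate_eq : ∀ m, ∀ i ∈ I m, totalRate R i / φ i = rC m
  rate_ne : ∀ m l, m ≠ l → rC m ≠ rC l
  server_iff : ∀ m k, (k ∈ S m ∧ 0 < rC m) ↔ ∃ i ∈ I m, 0 < R i k

/-!
If user `i` is served by `k` and a backlogged user `j` is eligible to `k`, then moving the whole
rate of `i` at `k` over to `j` gives another rate allocation in which `i` is the only user to
lose. Since `j` gains, fairness forces `i` to have had at most the normalized rate of `j`. A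
cluster with positive rate serves each of its servers through one of its own users, so this
comparison of users becomes a comparison of cluster rates, which is strict because the rates are
distinct.
-/

section Transfer

variable {ι κ : Type*} [DecidableEq ι] [DecidableEq κ] {R : ι → κ → ℝ} {i j : ι} {k : κ} {ε : ℝ}

/-- The rate matrix obtained from `R` by moving an amount `ε` of the rate of server `k` from
user `i` to user `j`. It is the competitor tested against a fair allocation. The users `i` and `j`
may coincide, in which case it is `R` itself. -/
def transferRate (R : ι → κ → ℝ) (i j : ι) (k : κ) (ε : ℝ) : ι → κ → ℝ :=
  R + Pi.single j (Pi.single k ε) - Pi.single i (Pi.single k ε)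

theorem single_single_le (hR : 0 ≤ R) (hε : ε ≤ R i k) :
    Pi.single i (Pi.single k ε) ≤ R :=
  update_le_iff.mpr ⟨update_le_iff.mpr ⟨hε, fun b _ => hR i b⟩, fun a _ => hR a⟩

theorem transferRate_nonneg (hR : 0 ≤ R) (hε₀ : 0 ≤ ε) (hε : ε ≤ R i k) :
    0 ≤ transferRate R i j k ε :=
  sub_nonneg.mpr <| (single_single_le hR hε).trans <|
    le_add_of_nonneg_right <| Pi.single_nonneg.mpr <| Pi.single_nonneg.mpr hε₀

theorem transferRate_apply_le (hε₀ : 0 ≤ ε) {a : ι} {b : κ} (hab : a = j → b ≠ k) :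
    transferRate R i j k ε a b ≤ R a b := by
  have gain_eq_zero : (Pi.single j (Pi.single k ε) : ι → κ → ℝ) a b = 0 := by
    rcases eq_or_ne a j with rfl | ha
    · rw [Pi.single_eq_same, Pi.single_eq_of_ne (hab rfl)]
    · rw [Pi.single_eq_of_ne ha, Pi.zero_apply]
  have loss_nonneg : 0 ≤ (Pi.single i (Pi.single k ε) : ι → κ → ℝ) :=
    Pi.single_nonneg.mpr (Pi.single_nonneg.mpr hε₀)
  simpa only [transferRate, Pi.sub_apply, Pi.add_apply, gain_eq_zero, add_zero] using
    sub_le_self (R a b) (loss_nonneg a b)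

theorem sum_transferRate [Fintype ι] : ∑ a, transferRate R i j k ε a = ∑ a, R a := by
  simp only [transferRate, Pi.sub_apply, Pi.add_apply, sum_sub_distrib, sum_add_distrib,
    Fintype.sum_pi_single', add_sub_cancel_right]

end Transfer

section FairAllocation

variable {N K : ℕ} {B : Set (Fin N)} {π : Fin N → Fin K → Bool} {ρ : Fin K → ℝ} {φ : Fin N → ℝ}
  {R : Fin N → Fin K → ℝ} {i j : Fin N} {k : Fin K} {ε : ℝ}

theorem totalRate_transferRate :
    totalRate (transferRate R i j k ε) = totalRate R + Pi.single j ε - Pi.single i ε := by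
  ext a
  have row_sum (u : Fin N) : ∑ b, (Pi.single u (Pi.single k ε) : Fin N → Fin K → ℝ) a b =
      (Pi.single u ε : Fin N → ℝ) a := by
    rcases eq_or_ne a u with rfl | ha
    · simp only [Pi.single_eq_same, Fintype.sum_pi_single']
    · simp only [Pi.single_eq_of_ne ha, Pi.zero_apply, sum_const_zero]
  simp only [totalRate, transferRate, Pi.sub_apply, Pi.add_apply, sum_sub_distrib,
    sum_add_distrib, row_sum]

theorem IsRateAlloc.mem_of_totalRate_pos (hR : IsRateAlloc B π ρ R) (hi : 0 < totalRate R i) :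
    i ∈ B := by
  by_contra hiB
  exact hi.ne' (sum_eq_zero fun k _ => hR.2.1 i k hiB)

theorem IsRateAlloc.transfer (hR : IsRateAlloc B π ρ R) (hj : j ∈ B) (hjk : π j k = true)
    (hε₀ : 0 ≤ ε) (hε : ε ≤ R i k) : IsRateAlloc B π ρ (transferRate R i j k ε) := by
  obtain ⟨nonneg, backlogged, eligible, work⟩ := hR
  have nonneg' : 0 ≤ transferRate R i j k ε := transferRate_nonneg nonneg hε₀ hε
  have eq_zero {a : Fin N} {b : Fin K} (hab : a = j → b ≠ k) (h : R a b = 0) :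
      transferRate R i j k ε a b = 0 :=
    le_antisymm (h ▸ transferRate_apply_le hε₀ hab) (nonneg' a b)
  refine ⟨nonneg', fun a b ha => ?_, fun a b hab => ?_, fun b hb => ?_⟩
  · exact eq_zero (fun haj => absurd (haj ▸ hj) ha) (backlogged a b ha)
  · refine eq_zero ?_ (eligible a b hab)
    rintro rfl rfl
    exact Bool.false_ne_true (hab.symm.trans hjk)
  · rw [← work b hb, ← Finset.sum_apply, sum_transferRate, Finset.sum_apply]

theorem CM4Fair.totalRate_div_le_totalRate_div (hfair : CM4Fair B π ρ φ R) (hφ : 0 < φ j)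
    (hj : j ∈ B) (hjk : π j k = true) (hik : 0 < R i k) :
    totalRate R i / φ i ≤ totalRate R j / φ j := by
  rcases eq_or_ne i j with rfl | hij
  · exact le_rfl
  set R' := transferRate R i j k (R i k)
  have total_j : totalRate R' j = totalRate R j + R i k := by
    simp [R', totalRate_transferRate, hij.symm]
  have total_other {a : Fin N} (hai : a ≠ i) (haj : a ≠ j) : totalRate R' a = totalRate R a := by
    simp [R', totalRate_transferRate, hai, haj]
  have j_gains : totalRate R j / φ j < totalRate R' j / φ j := by
    rw [total_j]
    gcongr
    exact lt_add_of_pos_right _ hik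
  obtain ⟨a, ha_le, a_loses⟩ := hfair.2 R' (hfair.1.transfer hj hjk hik.le le_rfl) j j_gains
  have hai : a = i := by
    by_contra hai
    have haj : a ≠ j := by
      rintro rfl
      exact lt_asymm a_loses j_gains
    exact a_loses.ne (by rw [total_other hai haj])
  exact hai ▸ ha_le

end FairAllocation

/-- Corollary 2: if a user `j` in cluster `m` with positive total rate is
eligible to a server `k` of a different cluster `l`, then
`r^{C_m} > r^{C_l}`. -/
theorem foc_eligible_other_cluster {N K M : ℕ} (hN : 0 < N) (hK : 0 < K)
    (B : Set (Fin N)) (π : Fin N → Fin K → Bool) (ρ : Fin K → ℝ) (φ : Fin N → ℝ)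
    (hφ : ∀ i, 0 < φ i) (hρ : ∀ k, 0 ≤ ρ k)
    (hrow : ∀ i, ∃ k, π i k = true) (hcol : ∀ k, ∃ i, π i k = true)
    (R : Fin N → Fin K → ℝ) (hfair : CM4Fair B π ρ φ R)
    (I : Fin M → Finset (Fin N)) (S : Fin M → Finset (Fin K)) (rC : Fin M → ℝ)
    (hfoc : IsFOC π φ R I S rC)
    (m l : Fin M) (hml : l ≠ m)
    (j : Fin N) (hj : j ∈ I m) (hrj : 0 < totalRate R j)
    (k : Fin K) (hπ : π j k = true) (hk : k ∈ S l) :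
    rC l < rC m := by
  have hm : 0 < rC m := hfoc.rate_eq m j hj ▸ div_pos hrj (hφ j)
  refine lt_of_le_of_ne ?_ (hfoc.rate_ne l m hml)
  rcases le_or_gt (rC l) 0 with hl | hl
  · exact hl.trans hm.le
  obtain ⟨i, hi, hik⟩ := (hfoc.server_iff l k).mp ⟨hk, hl⟩
  rw [← hfoc.rate_eq l i hi, ← hfoc.rate_eq m j hj]
  exact hfair.totalRate_div_le_totalRate_div (hφ j) (hfair.1.mem_of_totalRate_pos hrj) hπ hik
end

section
/- Let I be a nonempty finite index set with |I| = N, let φ_i > 0 for i ∈ I, let L ≥ 0, and let F_i^0, F_i^1 (i ∈ I) and V^0, V^1 be real numbers satisfying: F_i^0 ≥ V^0 for all i ∈ I; F_i^1 ≤ V^1 + L/φ_i for all i ∈ I; and F_{i*}^1 = V^1 for some i* ∈ I. Define W_i = φ_i (F_i^1 − F_i^0). Then (Σ_{i∈I} φ_i)(V^1 − V^0) ≥ Σ_{i∈I} W_i − (N − 1)·L. Moreover, if additionally Σ_{i∈I} W_i ≥ P − L for a real number P, then (Σ_{i∈I} φ_i)(V^1 − V^0) ≥ P − N·L. -/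
open Finset

theorem sum_le_sum_add_card_sub_one_nsmul {ι M : Type*} [AddCommMonoid M] [PartialOrder M]
    [IsOrderedAddMonoid M] {s : Finset ι} {f g : ι → M} {c : M} {j : ι} (hj : j ∈ s)
    (hfg : f j ≤ g j) (h : ∀ i ∈ s, i ≠ j → f i ≤ g i + c) :
    ∑ i ∈ s, f i ≤ ∑ i ∈ s, g i + (#s - 1) • c := by
  classical
  have h_erase : ∑ i ∈ s.erase j, f i ≤ ∑ i ∈ s.erase j, (g i + c) :=
    sum_le_sum fun i hi ↦ h i (mem_of_mem_erase hi) (ne_of_mem_erase hi)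
  calc ∑ i ∈ s, f i = f j + ∑ i ∈ s.erase j, f i := (add_sum_erase s f hj).symm
    _ ≤ g j + ∑ i ∈ s.erase j, (g i + c) := add_le_add hfg h_erase
    _ = ∑ i ∈ s, g i + (#s - 1) • c := by
      rw [sum_add_distrib, sum_const, card_erase_of_mem hj, ← add_assoc, add_sum_erase s g hj]

section OrderedField

variable {K : Type*} [Field K] [PartialOrder K] [IsOrderedRing K]

theorem mul_sub_le_mul_sub_add_of_le_add_div {w x₀ x₁ v₀ v₁ c : K} (hw : 0 < w)
    (h₀ : v₀ ≤ x₀) (h₁ : x₁ ≤ v₁ + c / w) :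
    w * (x₁ - x₀) ≤ w * (v₁ - v₀) + c :=
  calc w * (x₁ - x₀) ≤ w * (v₁ + c / w - v₀) :=
        mul_le_mul_of_nonneg_left (sub_le_sub h₁ h₀) hw.le
    _ = w * (v₁ - v₀) + c := by
        rw [add_sub_right_comm, mul_add, mul_div_cancel₀ c hw.ne']

theorem single_server_work_level_lower_general {α : Type*} (I : Finset α)
    (φ F0 F1 : α → K) (V0 V1 L : K)
    (hφ : ∀ i ∈ I, 0 < φ i)
    (h0 : ∀ i ∈ I, V0 ≤ F0 i)
    (h1 : ∀ i ∈ I, F1 i ≤ V1 + L / φ i)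
    (hmin : ∃ i ∈ I, F1 i ≤ V1)
    (W : α → K) (hW : ∀ i ∈ I, W i = φ i * (F1 i - F0 i)) :
    (∑ i ∈ I, W i) - ((I.card : K) - 1) * L ≤ (∑ i ∈ I, φ i) * (V1 - V0) ∧
    ∀ P : K, P - L ≤ ∑ i ∈ I, W i →
      P - (I.card : K) * L ≤ (∑ i ∈ I, φ i) * (V1 - V0) := by
  obtain ⟨j, hj, hjV⟩ := hmin
  have work_min : W j ≤ φ j * (V1 - V0) := by
    rw [hW j hj]
    exact mul_le_mul_of_nonneg_left (sub_le_sub hjV (h0 j hj)) (hφ j hj).le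
  have work_other : ∀ i ∈ I, i ≠ j → W i ≤ φ i * (V1 - V0) + L := fun i hi _ ↦ by
    rw [hW i hi]
    exact mul_sub_le_mul_sub_add_of_le_add_div (hφ i hi) (h0 i hi) (h1 i hi)
  have total_work : (∑ i ∈ I, W i) - ((I.card : K) - 1) * L ≤ (∑ i ∈ I, φ i) * (V1 - V0) := by
    rw [sub_le_iff_le_add, sum_mul, ← Nat.cast_pred (card_pos.mpr ⟨j, hj⟩), ← nsmul_eq_mul]
    exact sum_le_sum_add_card_sub_one_nsmul hj work_min work_other
  refine ⟨total_work, fun P hP ↦ ?_⟩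
  calc P - (I.card : K) * L = P - L - ((I.card : K) - 1) * L := by ring
    _ ≤ (∑ i ∈ I, W i) - ((I.card : K) - 1) * L := sub_le_sub_right hP _
    _ ≤ (∑ i ∈ I, φ i) * (V1 - V0) := total_work

end OrderedField

/-- Algebraic core of the single-server lower bound (Lemma 7): if every tag
at time 0 is at least the work level `V0`, every tag at time 1 is at most
`V1 + L/φ_i`, and some tag at time 1 equals `V1`, then the increase of the
work level, scaled by the total weight, is at least the total allocated work
minus `(N-1)·L`; and if moreover `Σ W_i ≥ P - L`, it is at least `P - N·L`. -/
theorem single_server_work_level_lower {α : Type*} [DecidableEq α]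
    (I : Finset α) (hI : I.Nonempty)
    (φ F0 F1 : α → ℝ) (V0 V1 L : ℝ)
    (hφ : ∀ i ∈ I, 0 < φ i) (hL : 0 ≤ L)
    (h0 : ∀ i ∈ I, V0 ≤ F0 i)
    (h1 : ∀ i ∈ I, F1 i ≤ V1 + L / φ i)
    (hmin : ∃ i ∈ I, F1 i = V1)
    (W : α → ℝ) (hW : ∀ i ∈ I, W i = φ i * (F1 i - F0 i)) :
    (∑ i ∈ I, W i) - ((I.card : ℝ) - 1) * L ≤ (∑ i ∈ I, φ i) * (V1 - V0) ∧
    ∀ P : ℝ, P - L ≤ ∑ i ∈ I, W i →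
      P - (I.card : ℝ) * L ≤ (∑ i ∈ I, φ i) * (V1 - V0) :=
  single_server_work_level_lower_general I φ F0 F1 V0 V1 L hφ h0 h1
    (hmin.imp fun _ ↦ And.imp_right le_of_eq) W hW
end

section
/- Let R be a CM4-fair rate allocation matrix. If user i is backlogged (i ∈ B) and there exists a server k with π_{i,k} = 1 and ρ_k > 0, then the total rate of user i is positive: r_i > 0. -/
open Finset

/-!
A user with total rate zero cannot be made worse off, so no deviation that serves it can be
blocked: if some allocation gives user `i` a positive total rate, so does every CM4-fair one.
For a backlogged user eligible at a server of positive rate, such an allocation is obtained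
from any other by handing that whole server to the user.
-/

section

variable {N K : ℕ} {B : Set (Fin N)} {π : Fin N → Fin K → Bool} {ρ : Fin K → ℝ}
  {φ : Fin N → ℝ} {R R' : Fin N → Fin K → ℝ} {i : Fin N} {k : Fin K}

theorem totalRate_nonneg (hR : ∀ l, 0 ≤ R i l) : 0 ≤ totalRate R i :=
  sum_nonneg fun l _ => hR l

theorem le_totalRate (hR : ∀ l, 0 ≤ R i l) (k : Fin K) : R i k ≤ totalRate R i :=
  single_le_sum (fun l _ => hR l) (mem_univ k)

/-- The rate matrix obtained from `R` by giving server `k` to user `i` alone, at rate `c`;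
it is the deviation tested against fairness. Only column `k` of `R` changes. -/
def dedicateServer (R : Fin N → Fin K → ℝ) (k : Fin K) (i : Fin N) (c : ℝ) :
    Fin N → Fin K → ℝ :=
  fun j => Function.update (R j) k (if j = i then c else 0)

theorem dedicateServer_apply_server (R : Fin N → Fin K → ℝ) (k : Fin K) (i : Fin N) (c : ℝ)
    (j : Fin N) : dedicateServer R k i c j k = if j = i then c else 0 :=
  Function.update_self ..

theorem dedicateServer_apply_of_ne {l : Fin K} (hl : l ≠ k) (R : Fin N → Fin K → ℝ)
    (i : Fin N) (c : ℝ) (j : Fin N) : dedicateServer R k i c j l = R j l :=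
  Function.update_of_ne hl ..

theorem IsRateAlloc.dedicateServer (hR : IsRateAlloc B π ρ R) (hi : i ∈ B)
    (hπ : π i k = true) (hk : 0 ≤ ρ k) :
    IsRateAlloc B π ρ (dedicateServer R k i (ρ k)) := by
  obtain ⟨hnonneg, hidle, hinelig, hsum⟩ := hR
  refine ⟨fun j l => ?_, fun j l hj => ?_, fun j l hjl => ?_, fun l hl => ?_⟩ <;>
    obtain rfl | hlk := eq_or_ne l k
  · rw [dedicateServer_apply_server]
    exact ite_nonneg hk le_rfl
  · rw [dedicateServer_apply_of_ne hlk]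
    exact hnonneg j l
  · have hji : j ≠ i := fun h => hj (h ▸ hi)
    rw [dedicateServer_apply_server, if_neg hji]
  · rw [dedicateServer_apply_of_ne hlk]
    exact hidle j l hj
  · have hji : j ≠ i := fun h => Bool.false_ne_true (hjl.symm.trans (h ▸ hπ))
    rw [dedicateServer_apply_server, if_neg hji]
  · rw [dedicateServer_apply_of_ne hlk]
    exact hinelig j l hjl
  · simp only [dedicateServer_apply_server, sum_ite_eq', mem_univ, if_true]
  · simp only [dedicateServer_apply_of_ne hlk]
    exact hsum l hl

theorem CM4Fair.totalRate_pos_of_isRateAlloc (hfair : CM4Fair B π ρ φ R) (hφ : ∀ j, 0 < φ j)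
    (hR' : IsRateAlloc B π ρ R') (hpos : 0 < totalRate R' i) : 0 < totalRate R i := by
  obtain ⟨hR, hmaxmin⟩ := hfair
  refine (totalRate_nonneg (hR.1 i)).lt_of_ne' fun hzero => ?_
  have hgain : totalRate R i / φ i < totalRate R' i / φ i := by
    rw [hzero, zero_div]
    exact div_pos hpos (hφ i)
  obtain ⟨j, hj_le, hj_loss⟩ := hmaxmin R' hR' i hgain
  rw [hzero, zero_div] at hj_le
  have hj_nonneg : 0 ≤ totalRate R' j / φ j :=
    div_nonneg (totalRate_nonneg (hR'.1 j)) (hφ j).le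
  exact absurd (hj_loss.trans_le hj_le) hj_nonneg.not_gt

end

/-- Under a CM4-fair allocation, a backlogged user eligible to some server of
positive rate receives a positive total rate. -/
theorem cm4fair_pos_rate {N K : ℕ} (hN : 0 < N) (hK : 0 < K)
    (B : Set (Fin N)) (π : Fin N → Fin K → Bool) (ρ : Fin K → ℝ) (φ : Fin N → ℝ)
    (hφ : ∀ i, 0 < φ i) (hρ : ∀ k, 0 ≤ ρ k)
    (hrow : ∀ i, ∃ k, π i k = true) (hcol : ∀ k, ∃ i, π i k = true)
    (R : Fin N → Fin K → ℝ) (hfair : CM4Fair B π ρ φ R)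
    (i : Fin N) (hi : i ∈ B) (k : Fin K) (hπ : π i k = true) (hk : 0 < ρ k) :
    0 < totalRate R i := by
  have hded := hfair.1.dedicateServer hi hπ hk.le
  refine hfair.totalRate_pos_of_isRateAlloc hφ hded ?_
  calc
    0 < ρ k := hk
    _ = dedicateServer R k i (ρ k) i k := by rw [dedicateServer_apply_server, if_pos rfl]
    _ ≤ totalRate (dedicateServer R k i (ρ k)) i := le_totalRate (hded.1 i) k
end

section
/- Let {(I_m, S_m)}_{m=1}^{M} be an FOC for a CM4-fair rate allocation matrix R, and let (I_m, S_m) be a cluster with cluster rate r^{C_m} > 0. Then the cluster's capacity is exactly consumed by its users: Σ_{k ∈ S_m} ρ_k = r^{C_m} · Σ_{i ∈ I_m} φ_i. -/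
open Finset

/-! Every positive entry of `R` lies in one of the blocks `I m × S m`, so the sum of the block of
cluster `m` by rows is the total rate of its users, and by columns the total capacity of its servers
(each of which serves a backlogged user and is therefore exhausted). -/

theorem sum_sum_comm_of_mem_iff_mem {ι κ A : Type*} [Fintype ι] [Fintype κ]
    [AddCommMonoid A] {f : ι → κ → A} {s : Finset ι} {t : Finset κ}
    (h : ∀ i k, f i k ≠ 0 → (i ∈ s ↔ k ∈ t)) :
    ∑ i ∈ s, ∑ k, f i k = ∑ k ∈ t, ∑ i, f i k := by
  have row_sum (i : ι) (hi : i ∈ s) : ∑ k ∈ t, f i k = ∑ k, f i k :=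
    sum_subset (subset_univ t) fun k _ hk ↦ not_imp_comm.1 (fun hne ↦ (h i k hne).1 hi) hk
  have col_sum (k : κ) (hk : k ∈ t) : ∑ i ∈ s, f i k = ∑ i, f i k :=
    sum_subset (subset_univ s) fun i _ hi ↦ not_imp_comm.1 (fun hne ↦ (h i k hne).2 hk) hi
  calc ∑ i ∈ s, ∑ k, f i k
      = ∑ i ∈ s, ∑ k ∈ t, f i k := (sum_congr rfl row_sum).symm
    _ = ∑ k ∈ t, ∑ i ∈ s, f i k := sum_comm
    _ = ∑ k ∈ t, ∑ i, f i k := sum_congr rfl col_sum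

section Clustering

variable {N K M : ℕ} {B : Set (Fin N)} {π : Fin N → Fin K → Bool} {ρ : Fin K → ℝ} {φ : Fin N → ℝ}
  {R : Fin N → Fin K → ℝ} {I : Fin M → Finset (Fin N)} {S : Fin M → Finset (Fin K)}
  {rC : Fin M → ℝ} {m : Fin M} {i : Fin N} {k : Fin K}

theorem IsRateAlloc.sum_eq_of_ne_zero (hR : IsRateAlloc B π ρ R) (hik : R i k ≠ 0) :
    ∑ j, R j k = ρ k := by
  obtain ⟨-, eq_zero_of_notMem, eq_zero_of_not_eligible, sum_eq⟩ := hR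
  have backlogged : i ∈ B := not_imp_comm.1 (eq_zero_of_notMem i k) hik
  have eligible : π i k = true :=
    Bool.eq_true_of_not_eq_false (mt (eq_zero_of_not_eligible i k) hik)
  exact sum_eq k ⟨i, backlogged, eligible⟩

theorem IsFOC.mem_iff_mem_of_pos (hfoc : IsFOC π φ R I S rC) (hik : 0 < R i k) :
    i ∈ I m ↔ k ∈ S m := by
  have server_mem {l : Fin M} (hi : i ∈ I l) : k ∈ S l := ((hfoc.server_iff l k).2 ⟨i, hi, hik⟩).1
  refine ⟨server_mem, fun hk ↦ ?_⟩
  obtain ⟨l, hi⟩ := hfoc.I_cover i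
  have same_cluster : m = l := by
    by_contra hml
    exact disjoint_left.1 (hfoc.S_disjoint m l hml) hk (server_mem hi)
  exact same_cluster ▸ hi

theorem IsFOC.totalRate_eq_mul (hfoc : IsFOC π φ R I S rC) (hr : rC m ≠ 0) (hi : i ∈ I m) :
    totalRate R i = rC m * φ i := by
  have rate_eq := hfoc.rate_eq m i hi
  have weight_ne_zero : φ i ≠ 0 := (div_ne_zero_iff.1 (rate_eq ▸ hr)).2
  exact (div_eq_iff weight_ne_zero).1 rate_eq

theorem IsFOC.sum_eq_of_mem (hfoc : IsFOC π φ R I S rC) (hR : IsRateAlloc B π ρ R)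
    (hr : 0 < rC m) (hk : k ∈ S m) : ∑ i, R i k = ρ k := by
  obtain ⟨i, -, hik⟩ := (hfoc.server_iff m k).1 ⟨hk, hr⟩
  exact hR.sum_eq_of_ne_zero hik.ne'

theorem foc_cluster_capacity_general (hR : IsRateAlloc B π ρ R) (hfoc : IsFOC π φ R I S rC)
    (hr : 0 < rC m) : ∑ k ∈ S m, ρ k = rC m * ∑ i ∈ I m, φ i := by
  have mem_iff_mem (i : Fin N) (k : Fin K) (hik : R i k ≠ 0) : i ∈ I m ↔ k ∈ S m :=
    hfoc.mem_iff_mem_of_pos ((hR.1 i k).lt_of_ne' hik)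
  calc ∑ k ∈ S m, ρ k
      = ∑ k ∈ S m, ∑ i, R i k := sum_congr rfl fun k hk ↦ (hfoc.sum_eq_of_mem hR hr hk).symm
    _ = ∑ i ∈ I m, totalRate R i := (sum_sum_comm_of_mem_iff_mem mem_iff_mem).symm
    _ = ∑ i ∈ I m, rC m * φ i := sum_congr rfl fun i hi ↦ hfoc.totalRate_eq_mul hr.ne' hi
    _ = rC m * ∑ i ∈ I m, φ i := (mul_sum ..).symm

end Clustering

/-- In an FOC, the capacity of a cluster of positive rate is exactly consumed
by its users: `Σ_{k ∈ S_m} ρ_k = r^{C_m} · Σ_{i ∈ I_m} φ_i`. -/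
theorem foc_cluster_capacity {N K M : ℕ} (hN : 0 < N) (hK : 0 < K)
    (B : Set (Fin N)) (π : Fin N → Fin K → Bool) (ρ : Fin K → ℝ) (φ : Fin N → ℝ)
    (hφ : ∀ i, 0 < φ i) (hρ : ∀ k, 0 ≤ ρ k)
    (hrow : ∀ i, ∃ k, π i k = true) (hcol : ∀ k, ∃ i, π i k = true)
    (R : Fin N → Fin K → ℝ) (hfair : CM4Fair B π ρ φ R)
    (I : Fin M → Finset (Fin N)) (S : Fin M → Finset (Fin K)) (rC : Fin M → ℝ)
    (hfoc : IsFOC π φ R I S rC)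
    (m : Fin M) (hr : 0 < rC m) :
    ∑ k ∈ S m, ρ k = rC m * ∑ i ∈ I m, φ i :=
  foc_cluster_capacity_general hfair.1 hfoc hr
end
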